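/- arXiv:1610.07219 — 2 statements merged into one kernel-verified Lean document; each statement's English description precedes it below -/
import Mathlib

section
/- Let t ≥ 1 and let a_i, b_i, c_i (1 ≤ i ≤ t) be positive integers, and let G = G(a,b,c) be the corresponding subdivision of K_{3,t}. Then for every natural number x ≥ 3: (x(x−1)(x−2))^(t−1)·π(G,x) = (x−2)^(t−1)·( Π_{i=1}^t π(θ_{a_i+1,b_i,c_i},x) + Π_{i=1}^t π(θ_{a_i,b_i+1,c_i},x) + Π_{i=1}^t π(θ_{a_i,b_i,c_i+1},x) ) + ((x−1)(x−2))^(t−1)·Π_{i=1}^t π(θ_{a_i,b_i,c_i},x) + Π_{i=1}^t π(SK4^{a_i,b_i,c_i},x). -/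
/-! Color the hubs `u₁, u₂, u₃` of `G` first. The rest of `G` then falls apart into `t` independent
spiders with feet `u₁, u₂, u₃`, so `π(G,x) = ∑_p ∏ᵢ Fᵢ(p)`, where `p` runs over triples of colors
and `Fᵢ(p)` (`spiderCount`) counts the colorings of the `i`-th spider with feet colored `p`
(`chromPoly_k3t`).

Permuting colors shows that `Fᵢ(p)` depends only on which entries of `p` agree
(`spiderCount_eq`). Split the triples by this pattern (`sum_split`) and let `S` be one of the five
classes. Then `∑_{p ∈ S} Fᵢ(p)` counts the colorings of the graph obtained from the `i`-th spider
by identifying feet that must agree and joining feet that must differ: it is `θ_{aᵢ,bᵢ,cᵢ}` if all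
three agree, `θ_{aᵢ+1,bᵢ,cᵢ}` or one of its two analogues if one foot differs from the other two
(the additional edge prolongs the leg of that foot), and `SK₄^{aᵢ,bᵢ,cᵢ}` if all are distinct
(`theta_zero`, `theta_one`, `theta_two`, `theta_three`, `chromPoly_sk4`).

As `Fᵢ` is constant on `S`, `|S|^(t-1) ∑_{p ∈ S} ∏ᵢ Fᵢ(p) = ∏ᵢ ∑_{p ∈ S} Fᵢ(p)`
(`card_pow_mul_sum_prod`). The classes have sizes `x`, `x(x-1)` (three times) and
`x(x-1)(x-2)`; multiplying each identity by the factor completing `|S|` to `x(x-1)(x-2)` and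
adding up gives the theorem.
-/

open SimpleGraph Finset

/-- `chromPoly G x` is the number of proper `x`-colorings of the graph `G`,
i.e. the value `π(G,x)` of the chromatic polynomial at `x`. -/
noncomputable def chromPoly {V : Type} (G : SimpleGraph V) (x : ℕ) : ℕ :=
  Nat.card {f : V → Fin x // ∀ ⦃u v : V⦄, G.Adj u v → f u ≠ f v}

/-- Relation generating the theta graph `θ_{s₁,s₂,s₃}`: vertex `Sum.inl 0` is `u`,
vertex `Sum.inl 1` is `v`, and the three `Fin (sᵢ - 1)` blocks are the internal
vertices of the three internally disjoint `u,v`-paths with `s₁`, `s₂`, `s₃` edges.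
When `sᵢ = 1` the corresponding path is the single edge `uv` (coinciding edges
being identified, so the graph is simple). -/
def thetaRel (s₁ s₂ s₃ : ℕ) :
    (Fin 2 ⊕ (Fin (s₁-1) ⊕ Fin (s₂-1) ⊕ Fin (s₃-1))) →
    (Fin 2 ⊕ (Fin (s₁-1) ⊕ Fin (s₂-1) ⊕ Fin (s₃-1))) → Prop
  | Sum.inl a, Sum.inl b => a = 0 ∧ b = 1 ∧ (s₁ = 1 ∨ s₂ = 1 ∨ s₃ = 1)
  | Sum.inl a, Sum.inr (Sum.inl i) => (a = 0 ∧ (i:ℕ) = 0) ∨ (a = 1 ∧ (i:ℕ) = s₁ - 2)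
  | Sum.inl a, Sum.inr (Sum.inr (Sum.inl i)) => (a = 0 ∧ (i:ℕ) = 0) ∨ (a = 1 ∧ (i:ℕ) = s₂ - 2)
  | Sum.inl a, Sum.inr (Sum.inr (Sum.inr i)) => (a = 0 ∧ (i:ℕ) = 0) ∨ (a = 1 ∧ (i:ℕ) = s₃ - 2)
  | Sum.inr (Sum.inl i), Sum.inr (Sum.inl j) => (j:ℕ) = (i:ℕ) + 1
  | Sum.inr (Sum.inr (Sum.inl i)), Sum.inr (Sum.inr (Sum.inl j)) => (j:ℕ) = (i:ℕ) + 1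
  | Sum.inr (Sum.inr (Sum.inr i)), Sum.inr (Sum.inr (Sum.inr j)) => (j:ℕ) = (i:ℕ) + 1
  | _, _ => False

/-- The theta graph `θ_{s₁,s₂,s₃}`: two vertices joined by three internally disjoint
paths with `s₁`, `s₂`, `s₃` edges (of order `s₁+s₂+s₃-1` when all `sᵢ ≥ 1`). -/
def thetaGraph (s₁ s₂ s₃ : ℕ) :
    SimpleGraph (Fin 2 ⊕ (Fin (s₁-1) ⊕ Fin (s₂-1) ⊕ Fin (s₃-1))) :=
  SimpleGraph.fromRel (thetaRel s₁ s₂ s₃)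

/-- Relation generating the subdivision `SK₄^{s₁,s₂,s₃}` of `K₄`: vertex `Sum.inl 0`
is `w`; the three edges from `w` to the triangle vertices `Sum.inl 1`, `Sum.inl 2`,
`Sum.inl 3` are replaced by internally disjoint paths with `s₁`, `s₂`, `s₃` edges
(internal vertices being the `Fin (sᵢ - 1)` blocks), and the triangle is undivided. -/
def sk4Rel (s₁ s₂ s₃ : ℕ) :
    (Fin 4 ⊕ (Fin (s₁-1) ⊕ Fin (s₂-1) ⊕ Fin (s₃-1))) →
    (Fin 4 ⊕ (Fin (s₁-1) ⊕ Fin (s₂-1) ⊕ Fin (s₃-1))) → Prop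
  | Sum.inl a, Sum.inl b =>
      (a = 1 ∧ b = 2) ∨ (a = 1 ∧ b = 3) ∨ (a = 2 ∧ b = 3) ∨
      (a = 0 ∧ b = 1 ∧ s₁ = 1) ∨ (a = 0 ∧ b = 2 ∧ s₂ = 1) ∨ (a = 0 ∧ b = 3 ∧ s₃ = 1)
  | Sum.inl a, Sum.inr (Sum.inl i) => (a = 0 ∧ (i:ℕ) = 0) ∨ (a = 1 ∧ (i:ℕ) = s₁ - 2)
  | Sum.inl a, Sum.inr (Sum.inr (Sum.inl i)) => (a = 0 ∧ (i:ℕ) = 0) ∨ (a = 2 ∧ (i:ℕ) = s₂ - 2)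
  | Sum.inl a, Sum.inr (Sum.inr (Sum.inr i)) => (a = 0 ∧ (i:ℕ) = 0) ∨ (a = 3 ∧ (i:ℕ) = s₃ - 2)
  | Sum.inr (Sum.inl i), Sum.inr (Sum.inl j) => (j:ℕ) = (i:ℕ) + 1
  | Sum.inr (Sum.inr (Sum.inl i)), Sum.inr (Sum.inr (Sum.inl j)) => (j:ℕ) = (i:ℕ) + 1
  | Sum.inr (Sum.inr (Sum.inr i)), Sum.inr (Sum.inr (Sum.inr j)) => (j:ℕ) = (i:ℕ) + 1
  | _, _ => False

/-- The subdivision `SK₄^{s₁,s₂,s₃}` of `K₄` in which the three edges incident to one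
vertex `w` are replaced by internally disjoint paths with `s₁`, `s₂`, `s₃` edges,
while the opposite triangle is left undivided. -/
def sk4Graph (s₁ s₂ s₃ : ℕ) :
    SimpleGraph (Fin 4 ⊕ (Fin (s₁-1) ⊕ Fin (s₂-1) ⊕ Fin (s₃-1))) :=
  SimpleGraph.fromRel (sk4Rel s₁ s₂ s₃)

/-- Relation generating the subdivision of `K_{3,t}`: the three hubs are `Sum.inl 0`,
`Sum.inl 1`, `Sum.inl 2`, the spokes are `Sum.inr (Sum.inl i)` for `i : Fin t`, and
for each `i` the edge from hub `0` (resp. `1`, `2`) to spoke `i` is replaced by an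
internally disjoint path with `a i` (resp. `b i`, `c i`) edges, whose internal
vertices form the corresponding block of the sigma type. -/
def k3tRel (t : ℕ) (a b c : Fin t → ℕ) :
    (Fin 3 ⊕ Fin t ⊕ (Σ i : Fin t, (Fin (a i - 1) ⊕ Fin (b i - 1) ⊕ Fin (c i - 1)))) →
    (Fin 3 ⊕ Fin t ⊕ (Σ i : Fin t, (Fin (a i - 1) ⊕ Fin (b i - 1) ⊕ Fin (c i - 1)))) → Prop
  | Sum.inl k, Sum.inr (Sum.inl i) =>
      (k = 0 ∧ a i = 1) ∨ (k = 1 ∧ b i = 1) ∨ (k = 2 ∧ c i = 1)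
  | Sum.inl k, Sum.inr (Sum.inr ⟨_, Sum.inl j⟩) => k = 0 ∧ (j:ℕ) = 0
  | Sum.inl k, Sum.inr (Sum.inr ⟨_, Sum.inr (Sum.inl j)⟩) => k = 1 ∧ (j:ℕ) = 0
  | Sum.inl k, Sum.inr (Sum.inr ⟨_, Sum.inr (Sum.inr j)⟩) => k = 2 ∧ (j:ℕ) = 0
  | Sum.inr (Sum.inl i), Sum.inr (Sum.inr ⟨i', Sum.inl j⟩) => i = i' ∧ (j:ℕ) = a i' - 2
  | Sum.inr (Sum.inl i), Sum.inr (Sum.inr ⟨i', Sum.inr (Sum.inl j)⟩) => i = i' ∧ (j:ℕ) = b i' - 2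
  | Sum.inr (Sum.inl i), Sum.inr (Sum.inr ⟨i', Sum.inr (Sum.inr j)⟩) => i = i' ∧ (j:ℕ) = c i' - 2
  | Sum.inr (Sum.inr ⟨i, Sum.inl j⟩), Sum.inr (Sum.inr ⟨i', Sum.inl j'⟩) =>
      i = i' ∧ (j':ℕ) = (j:ℕ) + 1
  | Sum.inr (Sum.inr ⟨i, Sum.inr (Sum.inl j)⟩), Sum.inr (Sum.inr ⟨i', Sum.inr (Sum.inl j')⟩) =>
      i = i' ∧ (j':ℕ) = (j:ℕ) + 1
  | Sum.inr (Sum.inr ⟨i, Sum.inr (Sum.inr j)⟩), Sum.inr (Sum.inr ⟨i', Sum.inr (Sum.inr j')⟩) =>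
      i = i' ∧ (j':ℕ) = (j:ℕ) + 1
  | _, _ => False

/-- The subdivision `G(a,b,c)` of `K_{3,t}` with bipartition hubs `{u₁,u₂,u₃}` and
spokes `{v₁,…,v_t}` in which, for each `i`, the edge `u₁vᵢ` is replaced by a path
with `a i` edges, `u₂vᵢ` by a path with `b i` edges and `u₃vᵢ` by a path with
`c i` edges, all `3t` paths being internally disjoint.  It has
`(∑ i, (a i + b i + c i)) - 2t + 3` vertices. -/
def k3tGraph (t : ℕ) (a b c : Fin t → ℕ) :
    SimpleGraph (Fin 3 ⊕ Fin t ⊕ (Σ i : Fin t, (Fin (a i - 1) ⊕ Fin (b i - 1) ⊕ Fin (c i - 1)))) :=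
  SimpleGraph.fromRel (k3tRel t a b c)

/-! ### Colorings of a path with prescribed end colors -/

/-- `f` gives different colors to the two ends of every `R`-related pair. -/
def ProperOn {V : Type} {x : ℕ} (R : V → V → Prop) (f : V → Fin x) : Prop :=
  ∀ u v, R u v → f u ≠ f v

/-- For an irreflexive relation the requirement `u ≠ v` in `fromRel` is automatic. -/
theorem chromPoly_fromRel {V : Type} (R : V → V → Prop) (hR : ∀ u, ¬ R u u) (x : ℕ) :
    chromPoly (SimpleGraph.fromRel R) x = Nat.card {f : V → Fin x // ProperOn R f} := by
  unfold chromPoly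
  refine Nat.card_congr (Equiv.subtypeEquivRight fun f => ?_)
  simp only [ProperOn, SimpleGraph.fromRel_adj]
  constructor
  · intro h u v huv
    refine h ⟨?_, Or.inl huv⟩
    rintro rfl
    exact hR u huv
  · rintro h u v ⟨-, h1 | h1⟩
    · exact h u v h1
    · exact (h v u h1).symm

/-- `g` colors the `s - 1` internal vertices of a path with `s` edges so that, together with
the colors `p` and `q` of its two ends, the whole path is properly colored. -/
def PathOK {x : ℕ} (s : ℕ) (p q : Fin x) (g : Fin (s - 1) → Fin x) : Prop :=
  (s = 1 → p ≠ q) ∧ (∀ i : Fin (s - 1), (i : ℕ) = 0 → p ≠ g i) ∧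
    (∀ i : Fin (s - 1), (i : ℕ) = s - 2 → q ≠ g i) ∧
    ∀ i j : Fin (s - 1), (j : ℕ) = (i : ℕ) + 1 → g i ≠ g j

/-- The number of proper colorings of a path with `s` edges whose ends have the prescribed
colors `p` and `q`. -/
noncomputable def pathCount {x : ℕ} (s : ℕ) (p q : Fin x) : ℕ :=
  Nat.card {g : Fin (s - 1) → Fin x // PathOK s p q g}

theorem pathOK_cons {x : ℕ} (n : ℕ) (p q r : Fin x) (g : Fin n → Fin x) :
    PathOK (n + 2) p q (Fin.cons r g : Fin (n + 1) → Fin x) ↔ p ≠ r ∧ PathOK (n + 1) r q g := by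
  unfold PathOK
  show (_ ∧ (∀ i : Fin (n+1), _) ∧ (∀ i : Fin (n+1), _) ∧ ∀ i j : Fin (n+1), _) ↔
    _ ∧ (_ ∧ (∀ i : Fin n, _) ∧ (∀ i : Fin n, _) ∧ ∀ i j : Fin n, _)
  simp only [Fin.forall_fin_succ, Fin.cons_zero, Fin.cons_succ, Fin.val_zero, Fin.val_succ]
  constructor
  · rintro ⟨-, ⟨h1, -⟩, ⟨h3, h4⟩, ⟨-, h5⟩, h6⟩
    refine ⟨h1 trivial, fun hn => (h3 (by omega)).symm, fun i hi => h5 i (by omega),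
      fun i hi => h4 i (by omega), fun i j hij => (h6 i).2 j (by omega)⟩
  · rintro ⟨h1, h2, h3, h4, h5⟩
    refine ⟨by omega, ⟨fun _ => h1, by omega⟩, ⟨fun h => (h2 (by omega)).symm, fun i hi => h4 i (by omega)⟩,
      ⟨by omega, fun i hi => h3 i (by omega)⟩, fun i => ⟨by omega, fun j hj => h5 i j (by omega)⟩⟩

/-- Splitting off the first edge of a path. -/
theorem pathCount_succ {x : ℕ} (s : ℕ) (hs : 1 ≤ s) (p q : Fin x) :
    pathCount (s + 1) p q = ∑ r, if p ≠ r then pathCount s r q else 0 := by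
  obtain ⟨n, rfl⟩ : ∃ n, s = n + 1 := ⟨s - 1, by omega⟩
  rw [← Finset.sum_filter, ← Finset.sum_subtype_eq_sum_filter, Finset.subtype_univ]
  unfold pathCount
  rw [← Nat.card_sigma]
  refine Nat.card_congr ⟨
    fun g => ⟨⟨g.1 (0 : Fin (n + 1)), ?_⟩, ⟨Fin.tail (n := n) g.1, ?_⟩⟩,
    fun g => ⟨(Fin.cons g.1.1 g.2.1 : Fin (n + 1) → Fin x),
      (pathOK_cons n p q _ _).2 ⟨g.1.2, g.2.2⟩⟩, ?_, ?_⟩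
  · refine ((pathOK_cons n p q (g.1 (0 : Fin (n + 1))) (Fin.tail (n := n) g.1)).1 ?_).1
    exact (Fin.cons_self_tail (n := n) (α := fun _ => Fin x) g.1).symm ▸ g.2
  · refine ((pathOK_cons n p q (g.1 (0 : Fin (n + 1))) (Fin.tail (n := n) g.1)).1 ?_).2
    exact (Fin.cons_self_tail (n := n) (α := fun _ => Fin x) g.1).symm ▸ g.2
  · intro g
    exact Subtype.ext (Fin.cons_self_tail (n := n) (α := fun _ => Fin x) g.1)
  · intro g
    rfl

theorem pathCount_perm {x : ℕ} (σ : Equiv.Perm (Fin x)) (s : ℕ) (p q : Fin x) :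
    pathCount s (σ p) (σ q) = pathCount s p q := by
  symm
  refine Nat.card_congr (Equiv.subtypeEquiv (Equiv.arrowCongr (Equiv.refl _) σ) fun g => ?_)
  simp [PathOK]

/-- By color symmetry, using the transposition of `p` and `q`. -/
theorem pathCount_comm {x : ℕ} (s : ℕ) (p q : Fin x) : pathCount s p q = pathCount s q p := by
  rw [← pathCount_perm (Equiv.swap p q) s p q, Equiv.swap_apply_left, Equiv.swap_apply_right]

/-! ### Colorings of the three graphs as sums of products of path counts -/

/-- Fixing the colors `p`, `r` of the two ends makes the three paths independent. -/
theorem chromPoly_theta (s₁ s₂ s₃ x : ℕ) :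
    chromPoly (thetaGraph s₁ s₂ s₃) x = ∑ p : Fin x, ∑ r : Fin x,
      pathCount s₁ p r * pathCount s₂ p r * pathCount s₃ p r := by
  have key : ∀ f, ProperOn (x := x) (thetaRel s₁ s₂ s₃) f ↔
      PathOK s₁ (f (Sum.inl 0)) (f (Sum.inl 1)) (fun i => f (Sum.inr (Sum.inl i))) ∧
      PathOK s₂ (f (Sum.inl 0)) (f (Sum.inl 1)) (fun i => f (Sum.inr (Sum.inr (Sum.inl i)))) ∧
      PathOK s₃ (f (Sum.inl 0)) (f (Sum.inl 1)) (fun i => f (Sum.inr (Sum.inr (Sum.inr i)))) := by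
    intro f
    simp only [ProperOn, PathOK, Sum.forall, thetaRel, Fin.forall_fin_two]
    grind
  rw [thetaGraph, chromPoly_fromRel]
  swap
  · rintro (a | i | i | i) <;> simp [thetaRel]
    omega
  rw [← Fintype.sum_prod_type' (fun p r => pathCount s₁ p r * pathCount s₂ p r * pathCount s₃ p r)]
  simp only [pathCount, ← Nat.card_prod]
  rw [← Nat.card_sigma]
  refine Nat.card_congr ⟨
    fun f => ⟨(f.1 (Sum.inl 0), f.1 (Sum.inl 1)), (⟨_, ((key f.1).1 f.2).1⟩,
      ⟨_, ((key f.1).1 f.2).2.1⟩), ⟨_, ((key f.1).1 f.2).2.2⟩⟩,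
    fun g => ⟨Sum.elim ![g.1.1, g.1.2] (Sum.elim g.2.1.1.1 (Sum.elim g.2.1.2.1 g.2.2.1)),
      (key _).2 ⟨g.2.1.1.2, g.2.1.2.2, g.2.2.2⟩⟩, ?_, ?_⟩
  · intro f
    refine Subtype.ext (funext ?_)
    rintro (a | i | i | i)
    · fin_cases a <;> rfl
    all_goals rfl
  · intro g
    rfl

/-- The number of proper colorings of the spider with legs of `s₁`, `s₂`, `s₃` edges whose
three feet have the prescribed colors `p₁`, `p₂`, `p₃`; the sum is over the color of the
center. -/
noncomputable def spiderCount {x : ℕ} (s₁ s₂ s₃ : ℕ) (p : Fin x × Fin x × Fin x) : ℕ :=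
  ∑ r : Fin x, pathCount s₁ p.1 r * pathCount s₂ p.2.1 r * pathCount s₃ p.2.2 r

/-- Once the hubs are colored, the `t` spiders glued along their feet are independent. -/
theorem chromPoly_k3t (t : ℕ) (a b c : Fin t → ℕ) (x : ℕ) :
    chromPoly (k3tGraph t a b c) x =
      ∑ p : Fin x × Fin x × Fin x, ∏ i, spiderCount (a i) (b i) (c i) p := by
  have key : ∀ f, ProperOn (x := x) (k3tRel t a b c) f ↔ ∀ i,
      PathOK (a i) (f (Sum.inl 0)) (f (Sum.inr (Sum.inl i)))
        (fun j => f (Sum.inr (Sum.inr ⟨i, Sum.inl j⟩))) ∧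
      PathOK (b i) (f (Sum.inl 1)) (f (Sum.inr (Sum.inl i)))
        (fun j => f (Sum.inr (Sum.inr ⟨i, Sum.inr (Sum.inl j)⟩))) ∧
      PathOK (c i) (f (Sum.inl 2)) (f (Sum.inr (Sum.inl i)))
        (fun j => f (Sum.inr (Sum.inr ⟨i, Sum.inr (Sum.inr j)⟩))) := by
    intro f
    constructor
    · intro h i
      refine ⟨⟨fun hs => h _ _ (Or.inl ⟨rfl, hs⟩), fun j hj => h _ _ ⟨rfl, hj⟩,
          fun j hj => h _ _ ⟨rfl, hj⟩, fun j j' hj => h _ _ ⟨rfl, hj⟩⟩,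
        ⟨fun hs => h _ _ (Or.inr (Or.inl ⟨rfl, hs⟩)), fun j hj => h _ _ ⟨rfl, hj⟩,
          fun j hj => h _ _ ⟨rfl, hj⟩, fun j j' hj => h _ _ ⟨rfl, hj⟩⟩,
        ⟨fun hs => h _ _ (Or.inr (Or.inr ⟨rfl, hs⟩)), fun j hj => h _ _ ⟨rfl, hj⟩,
          fun j hj => h _ _ ⟨rfl, hj⟩, fun j j' hj => h _ _ ⟨rfl, hj⟩⟩⟩
    · intro h
      rintro (k | i | ⟨i, j | j | j⟩) (k' | i' | ⟨i', j' | j' | j'⟩) huv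
      all_goals simp only [k3tRel] at huv
      · rcases huv with ⟨rfl, hs⟩ | ⟨rfl, hs⟩ | ⟨rfl, hs⟩
        · exact (h i').1.1 hs
        · exact (h i').2.1.1 hs
        · exact (h i').2.2.1 hs
      all_goals obtain ⟨rfl, hj⟩ := huv
      · exact (h i').1.2.1 _ hj
      · exact (h i').2.1.2.1 _ hj
      · exact (h i').2.2.2.1 _ hj
      · exact (h i).1.2.2.1 _ hj
      · exact (h i).2.1.2.2.1 _ hj
      · exact (h i).2.2.2.2.1 _ hj
      · exact (h i).1.2.2.2 _ _ hj
      · exact (h i).2.1.2.2.2 _ _ hj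
      · exact (h i).2.2.2.2.2 _ _ hj
  rw [k3tGraph, chromPoly_fromRel]
  swap
  · rintro (k | i | ⟨i, j | j | j⟩) <;> simp [k3tRel]
  simp only [spiderCount, pathCount, ← Nat.card_prod]
  simp only [← Nat.card_sigma, ← Nat.card_pi]
  refine Nat.card_congr ⟨
    fun f => ⟨(f.1 (Sum.inl 0), f.1 (Sum.inl 1), f.1 (Sum.inl 2)), fun i =>
      ⟨f.1 (Sum.inr (Sum.inl i)), (⟨_, ((key f.1).1 f.2 i).1⟩,
      ⟨_, ((key f.1).1 f.2 i).2.1⟩), ⟨_, ((key f.1).1 f.2 i).2.2⟩⟩⟩,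
    fun g => ⟨Sum.elim ![g.1.1, g.1.2.1, g.1.2.2] (Sum.elim (fun i => (g.2 i).1)
      fun v => Sum.elim (g.2 v.1).2.1.1.1 (Sum.elim (g.2 v.1).2.1.2.1 (g.2 v.1).2.2.1) v.2),
      (key _).2 fun i => ⟨(g.2 i).2.1.1.2, (g.2 i).2.1.2.2, (g.2 i).2.2.2⟩⟩, ?_, ?_⟩
  · intro f
    refine Subtype.ext (funext ?_)
    rintro (k | i | ⟨i, j | j | j⟩)
    · fin_cases k <;> rfl
    all_goals rfl
  · intro g
    rfl

/-- The triples of pairwise distinct colors. -/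
def distinctTriples (x : ℕ) : Finset (Fin x × Fin x × Fin x) :=
  univ.filter fun p => p.1 ≠ p.2.1 ∧ p.1 ≠ p.2.2 ∧ p.2.1 ≠ p.2.2

/-- The triangle receives distinct colors; the rest of `SK₄` is a spider with the triangle
vertices as feet. -/
theorem chromPoly_sk4 (s₁ s₂ s₃ x : ℕ) :
    chromPoly (sk4Graph s₁ s₂ s₃) x = ∑ p ∈ distinctTriples x, spiderCount s₁ s₂ s₃ p := by
  have key : ∀ f, ProperOn (x := x) (sk4Rel s₁ s₂ s₃) f ↔
      (f (Sum.inl 1) ≠ f (Sum.inl 2) ∧ f (Sum.inl 1) ≠ f (Sum.inl 3) ∧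
        f (Sum.inl 2) ≠ f (Sum.inl 3)) ∧
      PathOK s₁ (f (Sum.inl 0)) (f (Sum.inl 1)) (fun i => f (Sum.inr (Sum.inl i))) ∧
      PathOK s₂ (f (Sum.inl 0)) (f (Sum.inl 2)) (fun i => f (Sum.inr (Sum.inr (Sum.inl i)))) ∧
      PathOK s₃ (f (Sum.inl 0)) (f (Sum.inl 3)) (fun i => f (Sum.inr (Sum.inr (Sum.inr i)))) := by
    intro f
    constructor
    · intro h
      refine ⟨⟨h _ _ (Or.inl ⟨rfl, rfl⟩), h _ _ (Or.inr (Or.inl ⟨rfl, rfl⟩)),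
          h _ _ (Or.inr (Or.inr (Or.inl ⟨rfl, rfl⟩)))⟩,
        ⟨fun hs => h _ _ (Or.inr (Or.inr (Or.inr (Or.inl ⟨rfl, rfl, hs⟩)))),
          fun j hj => h _ _ (Or.inl ⟨rfl, hj⟩), fun j hj => h _ _ (Or.inr ⟨rfl, hj⟩),
          fun j j' hj => h _ _ hj⟩,
        ⟨fun hs => h _ _ (Or.inr (Or.inr (Or.inr (Or.inr (Or.inl ⟨rfl, rfl, hs⟩))))),
          fun j hj => h _ _ (Or.inl ⟨rfl, hj⟩), fun j hj => h _ _ (Or.inr ⟨rfl, hj⟩),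
          fun j j' hj => h _ _ hj⟩,
        ⟨fun hs => h _ _ (Or.inr (Or.inr (Or.inr (Or.inr (Or.inr ⟨rfl, rfl, hs⟩))))),
          fun j hj => h _ _ (Or.inl ⟨rfl, hj⟩), fun j hj => h _ _ (Or.inr ⟨rfl, hj⟩),
          fun j j' hj => h _ _ hj⟩⟩
    · rintro ⟨⟨h1, h2, h3⟩, ha, hb, hc⟩
      rintro (k | j | j | j) (k' | j' | j' | j') huv
      all_goals simp only [sk4Rel] at huv
      · rcases huv with ⟨rfl, rfl⟩ | ⟨rfl, rfl⟩ | ⟨rfl, rfl⟩ | ⟨rfl, rfl, hs⟩ | ⟨rfl, rfl, hs⟩ |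
          ⟨rfl, rfl, hs⟩
        exacts [h1, h2, h3, ha.1 hs, hb.1 hs, hc.1 hs]
      · rcases huv with ⟨rfl, hj⟩ | ⟨rfl, hj⟩
        exacts [ha.2.1 _ hj, ha.2.2.1 _ hj]
      · rcases huv with ⟨rfl, hj⟩ | ⟨rfl, hj⟩
        exacts [hb.2.1 _ hj, hb.2.2.1 _ hj]
      · rcases huv with ⟨rfl, hj⟩ | ⟨rfl, hj⟩
        exacts [hc.2.1 _ hj, hc.2.2.1 _ hj]
      exacts [ha.2.2.2 _ _ huv, hb.2.2.2 _ _ huv, hc.2.2.2 _ _ huv]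
  rw [sk4Graph, chromPoly_fromRel]
  swap
  · rintro (a | i | i | i) <;> simp [sk4Rel]
    omega
  rw [distinctTriples, ← Finset.sum_subtype_eq_sum_filter, Finset.subtype_univ]
  -- in `SK₄` the paths are listed from the center, in the spider from the feet
  simp only [spiderCount, pathCount_comm _ _ (_ : Fin x)]
  simp only [pathCount, ← Nat.card_prod]
  simp only [← Nat.card_sigma]
  refine Nat.card_congr ⟨
    fun f => ⟨⟨(f.1 (Sum.inl 1), f.1 (Sum.inl 2), f.1 (Sum.inl 3)), ((key f.1).1 f.2).1⟩,
      f.1 (Sum.inl 0), (⟨_, ((key f.1).1 f.2).2.1⟩,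
      ⟨_, ((key f.1).1 f.2).2.2.1⟩), ⟨_, ((key f.1).1 f.2).2.2.2⟩⟩,
    fun g => ⟨Sum.elim ![g.2.1, g.1.1.1, g.1.1.2.1, g.1.1.2.2]
      (Sum.elim g.2.2.1.1.1 (Sum.elim g.2.2.1.2.1 g.2.2.2.1)),
      (key _).2 ⟨g.1.2, g.2.2.1.1.2, g.2.2.1.2.2, g.2.2.2.2⟩⟩, ?_, ?_⟩
  · intro f
    refine Subtype.ext (funext ?_)
    rintro (a | i | i | i)
    · fin_cases a <;> rfl
    all_goals rfl
  · intro g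
    rfl

theorem sum_offDiag_eq {x : ℕ} (G : Fin x × Fin x → ℕ) :
    ∑ e ∈ (univ : Finset (Fin x)).offDiag, G e = ∑ p, ∑ q, if p ≠ q then G (p, q) else 0 := by
  rw [← Fintype.sum_prod_type' (fun p q => if p ≠ q then G (p, q) else 0), ← Finset.sum_filter]
  refine Finset.sum_congr ?_ fun _ _ => rfl
  ext e
  simp

/-- Gluing the three feet of a spider together gives a theta graph. -/
theorem theta_zero (s₁ s₂ s₃ x : ℕ) :
    chromPoly (thetaGraph s₁ s₂ s₃) x = ∑ p : Fin x, spiderCount s₁ s₂ s₃ (p, p, p) :=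
  chromPoly_theta s₁ s₂ s₃ x

/-- The first edge of the path with `s₁ + 1` edges joins the end colored `p` to a foot of a
spider colored differently from `p`, while the other two feet are that end. -/
theorem theta_one (s₁ s₂ s₃ x : ℕ) (h : 1 ≤ s₁) :
    chromPoly (thetaGraph (s₁ + 1) s₂ s₃) x =
      ∑ e ∈ (univ : Finset (Fin x)).offDiag, spiderCount s₁ s₂ s₃ (e.2, e.1, e.1) := by
  rw [chromPoly_theta, sum_offDiag_eq]
  refine Finset.sum_congr rfl fun p _ => ?_
  simp only [pathCount_succ _ h, spiderCount, Finset.sum_mul, ite_mul, zero_mul]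
  rw [Finset.sum_comm]
  refine Finset.sum_congr rfl fun q _ => ?_
  split_ifs <;> simp

theorem theta_two (s₁ s₂ s₃ x : ℕ) (h : 1 ≤ s₂) :
    chromPoly (thetaGraph s₁ (s₂ + 1) s₃) x =
      ∑ e ∈ (univ : Finset (Fin x)).offDiag, spiderCount s₁ s₂ s₃ (e.1, e.2, e.1) := by
  rw [chromPoly_theta, sum_offDiag_eq]
  refine Finset.sum_congr rfl fun p _ => ?_
  simp only [pathCount_succ _ h, spiderCount, Finset.sum_mul, Finset.mul_sum, mul_ite, ite_mul,
    zero_mul, mul_zero]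
  rw [Finset.sum_comm]
  refine Finset.sum_congr rfl fun q _ => ?_
  split_ifs <;> simp

theorem theta_three (s₁ s₂ s₃ x : ℕ) (h : 1 ≤ s₃) :
    chromPoly (thetaGraph s₁ s₂ (s₃ + 1)) x =
      ∑ e ∈ (univ : Finset (Fin x)).offDiag, spiderCount s₁ s₂ s₃ (e.1, e.1, e.2) := by
  rw [chromPoly_theta, sum_offDiag_eq]
  refine Finset.sum_congr rfl fun p _ => ?_
  simp only [pathCount_succ _ h, spiderCount, Finset.mul_sum, mul_ite, mul_zero]
  rw [Finset.sum_comm]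
  refine Finset.sum_congr rfl fun q _ => ?_
  split_ifs <;> simp

/-! ### Color symmetry and averaging -/

theorem spiderCount_perm {x : ℕ} (σ : Equiv.Perm (Fin x)) (s₁ s₂ s₃ : ℕ) (p q r : Fin x) :
    spiderCount s₁ s₂ s₃ (σ p, σ q, σ r) = spiderCount s₁ s₂ s₃ (p, q, r) := by
  unfold spiderCount
  rw [← Equiv.sum_comp σ]
  simp only [pathCount_perm]

/-- Two color triples with the same pattern of equalities differ by a permutation of the
colors, so they have the same `spiderCount`. -/
theorem spiderCount_eq {x : ℕ} (s₁ s₂ s₃ : ℕ) {p q r p' q' r' : Fin x}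
    (h1 : p = q ↔ p' = q') (h2 : p = r ↔ p' = r') (h3 : q = r ↔ q' = r') :
    spiderCount s₁ s₂ s₃ (p, q, r) = spiderCount s₁ s₂ s₃ (p', q', r') := by
  classical
  -- send `p, q, r` to `p', q', r'`, and extend from `{p, q, r}` to a permutation
  let f : Fin x → Fin x := fun y => if y = p then p' else if y = q then q' else r'
  obtain ⟨g, hg⟩ := Finset.exists_equiv_extend_of_card_eq (α := Fin x) (β := Fin x)
    (t := univ) (by simp) (s := {p, q, r}) (f := f) (Finset.subset_univ _) (by
      intro u hu v hv huv
      simp only [Finset.coe_insert, Finset.coe_singleton, Set.mem_insert_iff,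
        Set.mem_singleton_iff] at hu hv
      grind)
  let σ : Equiv.Perm (Fin x) := g.trans (Equiv.subtypeUnivEquiv (by simp))
  have hσ : ∀ i ∈ ({p, q, r} : Finset (Fin x)), σ i = f i := hg
  rw [← spiderCount_perm σ, hσ p (by simp), hσ q (by simp), hσ r (by simp)]
  congr 1
  grind

/-- If every `F i` is constant on `S`, then `∑ ∏` and `∏ ∑` over `S` agree up to a power of
the size of `S`. -/
theorem card_pow_mul_sum_prod {ι : Type} {t : ℕ} (ht : 1 ≤ t) (S : Finset ι)
    (F : Fin t → ι → ℕ) (hF : ∀ i, ∀ e ∈ S, ∀ e' ∈ S, F i e = F i e') :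
    #S ^ (t - 1) * ∑ e ∈ S, ∏ i, F i e = ∏ i, ∑ e ∈ S, F i e := by
  rcases S.eq_empty_or_nonempty with rfl | ⟨e₀, he₀⟩
  · have : Nonempty (Fin t) := ⟨⟨0, ht⟩⟩
    simp [show t ≠ 0 by omega]
  · have h1 : ∑ e ∈ S, ∏ i, F i e = #S * ∏ i, F i e₀ := by
      rw [Finset.sum_congr rfl fun e he => Finset.prod_congr rfl fun i _ => hF i e he e₀ he₀]
      simp
    have h2 : ∀ i, ∑ e ∈ S, F i e = #S * F i e₀ := fun i => by
      rw [Finset.sum_congr rfl fun e he => hF i e he e₀ he₀]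
      simp
    simp only [h1, h2, Finset.prod_mul_distrib]
    rw [← mul_assoc, ← pow_succ, Nat.sub_add_cancel ht]
    simp

/-- Triples of colors are sorted by their pattern of equalities: exactly one entry differs from
the other two (three patterns), all agree, or all differ. -/
theorem sum_split {x : ℕ} (G : Fin x × Fin x × Fin x → ℕ) :
    ∑ p, G p = (∑ e ∈ (univ : Finset (Fin x)).offDiag, G (e.2, e.1, e.1)
      + ∑ e ∈ (univ : Finset (Fin x)).offDiag, G (e.1, e.2, e.1)
      + ∑ e ∈ (univ : Finset (Fin x)).offDiag, G (e.1, e.1, e.2))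
      + ∑ p, G (p, p, p) + ∑ p ∈ distinctTriples x, G p := by
  have e0 : ∑ p, G (p, p, p) = ∑ p : Fin x × Fin x × Fin x,
      if p.1 = p.2.1 then if p.1 = p.2.2 then G p else 0 else 0 := by
    simp [Fintype.sum_prod_type]
  have e1 : ∑ e ∈ (univ : Finset (Fin x)).offDiag, G (e.2, e.1, e.1) =
      ∑ p : Fin x × Fin x × Fin x,
      if p.2.1 = p.2.2 then if p.2.1 ≠ p.1 then G p else 0 else 0 := by
    simp only [Fintype.sum_prod_type, sum_offDiag_eq,
      Finset.sum_ite_eq, Finset.mem_univ, if_true]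
    rw [Finset.sum_comm]
  have e2 : ∑ e ∈ (univ : Finset (Fin x)).offDiag, G (e.1, e.2, e.1) =
      ∑ p : Fin x × Fin x × Fin x,
      if p.1 = p.2.2 then if p.1 ≠ p.2.1 then G p else 0 else 0 := by
    simp [Fintype.sum_prod_type, sum_offDiag_eq]
  have e3 : ∑ e ∈ (univ : Finset (Fin x)).offDiag, G (e.1, e.1, e.2) =
      ∑ p : Fin x × Fin x × Fin x,
      if p.1 = p.2.1 then if p.1 ≠ p.2.2 then G p else 0 else 0 := by
    simp only [Fintype.sum_prod_type, sum_offDiag_eq]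
    refine Finset.sum_congr rfl fun p _ => ?_
    rw [Finset.sum_comm]
    simp
  rw [e0, e1, e2, e3, distinctTriples, Finset.sum_filter]
  simp only [← Finset.sum_add_distrib]
  refine Finset.sum_congr rfl fun p _ => ?_
  grind

theorem card_distinctTriples (x : ℕ) : #(distinctTriples x) = x * (x - 1) * (x - 2) := by
  -- triples of distinct colors are the injections from a three-element set
  have h : Fintype.card (Fin 3 ↪ Fin x) = #(distinctTriples x) := by
    rw [distinctTriples, ← Fintype.card_subtype]
    refine Fintype.card_congr ⟨fun e => ⟨(e 0, e 1, e 2), by simp⟩,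
      fun p => ⟨![p.1.1, p.1.2.1, p.1.2.2], ?_⟩, ?_, ?_⟩
    · obtain ⟨⟨p, q, r⟩, h1, h2, h3⟩ := p
      intro i j hij
      fin_cases i <;> fin_cases j <;> simp_all [eq_comm]
    · intro e
      ext i
      fin_cases i <;> rfl
    · intro p
      rfl
  rw [← h, Fintype.card_embedding_eq]
  simp [Nat.descFactorial]
  ring

/-- **Lemma 4.6** (multiplied-out form).  For `t ≥ 1`, positive path sizes
`a i, b i, c i` and every natural number `x ≥ 3`, the subdivision `G = G(a,b,c)` of
`K_{3,t}` satisfies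
`(x(x-1)(x-2))^(t-1) · π(G,x)
  = (x-2)^(t-1) · (∏ᵢ π(θ_{aᵢ+1,bᵢ,cᵢ},x) + ∏ᵢ π(θ_{aᵢ,bᵢ+1,cᵢ},x) + ∏ᵢ π(θ_{aᵢ,bᵢ,cᵢ+1},x))
    + ((x-1)(x-2))^(t-1) · ∏ᵢ π(θ_{aᵢ,bᵢ,cᵢ},x) + ∏ᵢ π(SK₄^{aᵢ,bᵢ,cᵢ},x)`. -/
theorem statement_11 (t : ℕ) (ht : 1 ≤ t) (a b c : Fin t → ℕ)
    (ha : ∀ i, 1 ≤ a i) (hb : ∀ i, 1 ≤ b i) (hc : ∀ i, 1 ≤ c i)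
    (x : ℕ) (hx : 3 ≤ x) :
    (x * (x-1) * (x-2)) ^ (t-1) * chromPoly (k3tGraph t a b c) x =
      (x-2) ^ (t-1) *
        ((∏ i, chromPoly (thetaGraph (a i + 1) (b i) (c i)) x)
          + (∏ i, chromPoly (thetaGraph (a i) (b i + 1) (c i)) x)
          + (∏ i, chromPoly (thetaGraph (a i) (b i) (c i + 1)) x))
      + ((x-1) * (x-2)) ^ (t-1) * (∏ i, chromPoly (thetaGraph (a i) (b i) (c i)) x)
      + ∏ i, chromPoly (sk4Graph (a i) (b i) (c i)) x := by
  have h0 := card_pow_mul_sum_prod ht (univ : Finset (Fin x))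
    (fun i p => spiderCount (a i) (b i) (c i) (p, p, p))
    (fun i e _ e' _ => spiderCount_eq _ _ _ (by simp) (by simp) (by simp))
  have h1 := card_pow_mul_sum_prod ht (univ : Finset (Fin x)).offDiag
    (fun i e => spiderCount (a i) (b i) (c i) (e.2, e.1, e.1)) (fun i e he e' he' => by
      simp only [Finset.mem_offDiag] at he he'
      exact spiderCount_eq _ _ _ (by grind) (by grind) (by grind))
  have h2 := card_pow_mul_sum_prod ht (univ : Finset (Fin x)).offDiag
    (fun i e => spiderCount (a i) (b i) (c i) (e.1, e.2, e.1)) (fun i e he e' he' => by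
      simp only [Finset.mem_offDiag] at he he'
      exact spiderCount_eq _ _ _ (by grind) (by grind) (by grind))
  have h3 := card_pow_mul_sum_prod ht (univ : Finset (Fin x)).offDiag
    (fun i e => spiderCount (a i) (b i) (c i) (e.1, e.1, e.2)) (fun i e he e' he' => by
      simp only [Finset.mem_offDiag] at he he'
      exact spiderCount_eq _ _ _ (by grind) (by grind) (by grind))
  have h4 := card_pow_mul_sum_prod ht (distinctTriples x)
    (fun i p => spiderCount (a i) (b i) (c i) p) (fun i e he e' he' => by
      simp only [distinctTriples, Finset.mem_filter] at he he'
      exact spiderCount_eq _ _ _ (by grind) (by grind) (by grind))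
  have hod : #(univ : Finset (Fin x)).offDiag = x * (x - 1) := by
    rw [Finset.offDiag_card, Finset.card_univ, Fintype.card_fin, Nat.mul_sub_one]
  rw [Finset.card_univ, Fintype.card_fin] at h0
  rw [hod] at h1 h2 h3
  rw [card_distinctTriples] at h4
  simp only [theta_one _ _ _ x (ha _), theta_two _ _ _ x (hb _), theta_three _ _ _ x (hc _),
    theta_zero, chromPoly_sk4]
  rw [← h0, ← h1, ← h2, ← h3, ← h4, chromPoly_k3t, sum_split]
  simp only [mul_pow]
  ring
end

section
/- Let G be a connected finite simple graph of order n in which every edge lies on at most one cycle (a cactus graph), with exactly p ≥ 1 cycles. Then for every natural number x ≥ 1, the real-number inequality 3^(3p)·(x+1)^(p−1)·x^(8p+1)·π(G, x+1) ≤ x^n·(3x^3+1)^(3p) holds. -/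
/-!
Colour with the elements of the cyclic group `ZMod (x + 1)`. Since `G` is connected, a proper
colouring is determined by the colour of one vertex together with its differences along the edges;
these differences are nonzero, and along each cycle they sum to zero. Writing `N ℓ` for the number
of zero-sum sequences of `ℓ` nonzero group elements, `ℓ i` for the length of the `i`-th cycle and
`r` for the number of edges outside all the cycles, this gives
`π(G, x + 1) ≤ (x + 1) * (∏ i, N (ℓ i)) * x ^ r` (`chromPoly_le`).

The two remaining ingredients are the following.
* `(x + 1) * N ℓ = x ^ ℓ + (-1) ^ ℓ * x` (`zeroSumCount_formula`), so that
  `(x + 1) * x ^ 2 * N ℓ ≤ x ^ (ℓ - 1) * (x ^ 3 + 1)` for `ℓ ≥ 3`, with equality at `ℓ = 4`.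
* `r + ∑ i, (ℓ i - 1) + 1 ≤ n` (`card_rest_add_le`): deleting one edge from each cycle leaves a
  forest.

Together they give `(x + 1) ^ (p - 1) * x ^ (2 * p + 1) * π(G, x + 1) ≤ x ^ n * (x ^ 3 + 1) ^ p`,
and the claim follows from `27 * y ^ 2 * (y + 1) ≤ (3 * y + 1) ^ 3` at `y = x ^ 3`.
-/

open SimpleGraph Finset

/-! ### Zero-sum sequences of nonzero group elements -/

/-- Sequences of `l` nonzero elements of `A` with sum zero. -/
abbrev ZeroSum (A : Type) [AddCommGroup A] (l : ℕ) : Type :=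
  {g : Fin l → A // (∀ j, g j ≠ 0) ∧ ∑ j, g j = 0}

/-- A sequence of nonzero elements whose sum is not zero extends in exactly one way to a zero-sum
sequence of nonzero elements that is one term longer. -/
def zeroSumSuccEquiv (A : Type) [AddCommGroup A] (l : ℕ) :
    ZeroSum A (l + 1) ≃ {g : Fin l → A // (∀ j, g j ≠ 0) ∧ ¬ ∑ j, g j = 0} where
  toFun g := ⟨fun j => g.1 j.succ, fun j => g.2.1 _, fun h => by
    have h2 := g.2.2
    rw [Fin.sum_univ_succ, h, add_zero] at h2
    exact g.2.1 0 h2⟩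
  invFun g := ⟨Fin.cons (-∑ j, g.1 j) g.1, fun j => by
      refine Fin.cases ?_ (fun j => ?_) j
      · simpa using g.2.2
      · simpa using g.2.1 j, by simp [Fin.sum_univ_succ]⟩
  left_inv g := by
    apply Subtype.ext
    funext j
    refine Fin.cases ?_ (fun j => ?_) j
    · have h2 := g.2.2
      rw [Fin.sum_univ_succ] at h2
      simpa using (eq_neg_of_add_eq_zero_left h2).symm
    · simp
  right_inv g := by
    apply Subtype.ext
    funext j
    simp

lemma card_nonzero (A : Type) [AddCommGroup A] [Fintype A] (x : ℕ)
    (hA : Nat.card A = x + 1) : Nat.card {a : A // a ≠ 0} = x := by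
  classical
  rw [Nat.card_eq_fintype_card] at hA ⊢
  rw [Fintype.card_subtype_compl, Fintype.card_subtype_eq, hA]
  simp

lemma card_nonzero_seq (A : Type) [AddCommGroup A] [Fintype A] (x l : ℕ)
    (hA : Nat.card A = x + 1) : Nat.card {g : Fin l → A // ∀ j, g j ≠ 0} = x ^ l := by
  rw [Nat.card_congr (Equiv.subtypePiEquivPi (p := fun (_ : Fin l) (a : A) => a ≠ 0)),
    Nat.card_pi]
  simp only [card_nonzero A x hA]
  simp

lemma zeroSum_rec (A : Type) [AddCommGroup A] [Fintype A] (x l : ℕ)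
    (hA : Nat.card A = x + 1) :
    Nat.card (ZeroSum A l) + Nat.card (ZeroSum A (l + 1)) = x ^ l := by
  classical
  rw [Nat.card_congr (zeroSumSuccEquiv A l), ← card_nonzero_seq A x l hA]
  simp only [Nat.card_eq_fintype_card, Fintype.card_subtype, ← Finset.filter_filter]
  exact Finset.card_filter_add_card_filter_not _

lemma zeroSumCount_formula (A : Type) [AddCommGroup A] [Fintype A] (x l : ℕ)
    (hA : Nat.card A = x + 1) :
    ((x : ℝ) + 1) * (Nat.card (ZeroSum A l) : ℝ) = (x : ℝ) ^ l + (-1) ^ l * x := by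
  induction l with
  | zero =>
    have : Nat.card (ZeroSum A 0) = 1 := by
      rw [Nat.card_eq_one_iff_unique]
      exact ⟨inferInstance, ⟨⟨Fin.elim0, fun j => j.elim0, by simp⟩⟩⟩
    rw [this]; push_cast; ring
  | succ l ih =>
    have h := zeroSum_rec A x l hA
    have h' : (Nat.card (ZeroSum A l) : ℝ) + Nat.card (ZeroSum A (l + 1)) = (x : ℝ) ^ l := by
      exact_mod_cast h
    linear_combination ((x : ℝ) + 1) * h' - ih

lemma zeroSumCount_le (A : Type) [AddCommGroup A] [Fintype A] (x l : ℕ) (hx : 1 ≤ x)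
    (hl : 3 ≤ l) (hA : Nat.card A = x + 1) :
    ((x : ℝ) + 1) * (x : ℝ) ^ 2 * (Nat.card (ZeroSum A l) : ℝ)
      ≤ (x : ℝ) ^ (l - 1) * ((x : ℝ) ^ 3 + 1) := by
  have hx' : (1 : ℝ) ≤ x := by exact_mod_cast hx
  have h := zeroSumCount_formula A x l hA
  have key : (-1 : ℝ) ^ l * (x : ℝ) ^ 3 ≤ (x : ℝ) ^ (l - 1) := by
    rcases Nat.even_or_odd l with he | ho
    · rw [he.neg_one_pow, one_mul]
      apply pow_le_pow_right₀ hx'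
      obtain ⟨m, rfl⟩ := he
      omega
    · rw [ho.neg_one_pow]
      have : (0 : ℝ) ≤ (x : ℝ) ^ 3 := by positivity
      have : (0 : ℝ) ≤ (x : ℝ) ^ (l - 1) := by positivity
      linarith
  have h1 : (x : ℝ) ^ l = (x : ℝ) ^ (l - 1) * x := by
    rw [← pow_succ]; congr 1; omega
  calc _ = (x : ℝ) ^ 2 * (((x : ℝ) + 1) * (Nat.card (ZeroSum A l) : ℝ)) := by ring
    _ = (x : ℝ) ^ (l - 1) * (x : ℝ) ^ 3 + (-1 : ℝ) ^ l * (x : ℝ) ^ 3 := by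
        rw [h, h1]; ring
    _ ≤ _ := by linarith

/-! ### Colourings and their differences along edges -/

section Graph

variable {V : Type} {G : SimpleGraph V} {p : ℕ} {u : Fin p → V}

lemma sum_getVert_sub {A : Type} [AddCommGroup A] {v : V} (q : G.Walk v v) (f : V → A) :
    ∑ j : Fin q.length, (f (q.getVert j) - f (q.getVert (j + 1))) = 0 := by
  rw [Fin.sum_univ_eq_sum_range (fun j => f (q.getVert j) - f (q.getVert (j + 1))),
    Finset.sum_range_sub' (fun j => f (q.getVert j))]
  simp

/-- The edges of `G` lying on none of the walks `w i`. -/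
abbrev Rest (w : ∀ i, G.Walk (u i) (u i)) : Type :=
  {e : Sym2 V // e ∈ G.edgeSet ∧ ∀ i, e ∉ (w i).edges}

lemma Rest.adj {w : ∀ i, G.Walk (u i) (u i)} (e : Rest w) :
    G.Adj (Quot.out e.1).1 (Quot.out e.1).2 := by
  rw [← SimpleGraph.mem_edgeSet]
  have : s((Quot.out e.1).1, (Quot.out e.1).2) = e.1 := Quot.out_eq e.1
  rw [this]
  exact e.2.1

/-- A proper colouring of a connected graph is determined by the colour of one vertex and by its
differences along the edges, where the edges on the walks are traversed in walk order and every
other edge is oriented by choosing a representative of the unordered pair. -/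
lemma chromPoly_le [Finite V] (hconn : G.Connected) (w : ∀ i, G.Walk (u i) (u i)) (x : ℕ) :
    chromPoly G (x + 1) ≤
      (x + 1) * (∏ i, Nat.card (ZeroSum (ZMod (x + 1)) (w i).length)) * x ^ Nat.card (Rest w) := by
  classical
  obtain ⟨r⟩ := hconn.nonempty
  let A := ZMod (x + 1)
  have hA : Nat.card A = x + 1 := Nat.card_zmod _
  let F : {f : V → A // ∀ ⦃a b : V⦄, G.Adj a b → f a ≠ f b} →
      A × (∀ i, ZeroSum A (w i).length) × (Rest w → {a : A // a ≠ 0}) := fun f =>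
    (f.1 r,
      fun i => ⟨fun j => f.1 ((w i).getVert j) - f.1 ((w i).getVert (j + 1)),
        fun j => sub_ne_zero.2 (f.2 ((w i).adj_getVert_succ j.2)), sum_getVert_sub (w i) f.1⟩,
      fun e => ⟨f.1 (Quot.out e.1).1 - f.1 (Quot.out e.1).2, sub_ne_zero.2 (f.2 e.adj)⟩)
  have hF : Function.Injective F := by
    intro f g hfg
    have h1 : f.1 r = g.1 r := congrArg Prod.fst hfg
    have h2 : ∀ i, ∀ j < (w i).length,
        f.1 ((w i).getVert j) - f.1 ((w i).getVert (j + 1)) =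
          g.1 ((w i).getVert j) - g.1 ((w i).getVert (j + 1)) := fun i j hj =>
      congrFun (congrArg Subtype.val (congrFun (congrArg (fun t => t.2.1) hfg) i)) ⟨j, hj⟩
    have h3 : ∀ e : Rest w, f.1 (Quot.out e.1).1 - f.1 (Quot.out e.1).2 =
        g.1 (Quot.out e.1).1 - g.1 (Quot.out e.1).2 := fun e =>
      congrArg Subtype.val (congrFun (congrArg (fun t => t.2.2) hfg) e)
    have hadj : ∀ a b, G.Adj a b → f.1 a - g.1 a = f.1 b - g.1 b := by
      intro a b hab
      -- The difference `f - g` agrees at the ends of an edge whichever way the edge is oriented.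
      have main : ∃ c d, s(c, d) = s(a, b) ∧ f.1 c - f.1 d = g.1 c - g.1 d := by
        by_cases hw : ∃ i, s(a, b) ∈ (w i).edges
        · obtain ⟨i, hi⟩ := hw
          obtain ⟨j, hj, hj2⟩ := (w i).mk_mem_edges_iff_exists.1 hi
          exact ⟨_, _, hj2, h2 i j hj⟩
        · push Not at hw
          exact ⟨_, _, Quot.out_eq s(a, b), h3 ⟨s(a, b), hab, hw⟩⟩
      obtain ⟨c, d, hcd, h⟩ := main
      have h' : f.1 c - g.1 c = f.1 d - g.1 d := by
        rw [sub_eq_sub_iff_add_eq_add] at h ⊢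
        rw [h, add_comm]
      rcases Sym2.eq_iff.1 hcd with ⟨rfl, rfl⟩ | ⟨rfl, rfl⟩
      · exact h'
      · exact h'.symm
    apply Subtype.ext
    funext v
    obtain ⟨q⟩ := hconn.preconnected v r
    have hv : f.1 v - g.1 v = f.1 r - g.1 r := by
      clear h1 hfg F
      induction q with
      | nil => rfl
      | cons h _ ih => rw [hadj _ _ h, ih]
    rw [h1, sub_self] at hv
    exact sub_eq_zero.1 hv
  have hle := Nat.card_le_card_of_injective F hF
  rw [Nat.card_prod, Nat.card_prod, Nat.card_pi, Nat.card_fun, card_nonzero A x hA, hA,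
    ← mul_assoc] at hle
  -- `ZMod (x + 1)` unfolds to `Fin (x + 1)`.
  exact hle

/-! ### Counting edges -/

/-- Deleting the first edge of every cycle leaves an acyclic graph, because each cycle of `G`
has the same edges as one of the `w i`. The edges outside the cycles and the non-initial edges of
the cycles are therefore all contained in a spanning tree. -/
lemma card_rest_add_le [Fintype V] (hconn : G.Connected) (w : ∀ i, G.Walk (u i) (u i))
    (hcyc : ∀ i, (w i).IsCycle)
    (hdisj : ∀ i j, i ≠ j → ∀ e, e ∈ (w i).edges → e ∉ (w j).edges)
    (hall : ∀ (v : V) (q : G.Walk v v), q.IsCycle →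
      ∃ i, ∀ e, e ∈ q.edges ↔ e ∈ (w i).edges) :
    Nat.card (Rest w) + ∑ i, ((w i).length - 1) + 1 ≤ Fintype.card V := by
  classical
  have hlen : ∀ i, 0 < (w i).edges.length := fun i => by
    have := (hcyc i).three_le_length
    rw [Walk.length_edges]; omega
  let r : Fin p → Sym2 V := fun i => (w i).edges[0]'(hlen i)
  have hr : ∀ i, r i ∈ (w i).edges := fun i => List.getElem_mem _
  let H := G.deleteEdges (Set.range r)
  have hHG : H ≤ G := G.deleteEdges_le _
  have hH : H.IsAcyclic := by
    intro v q hq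
    obtain ⟨i, hi⟩ := hall v (q.mapLe hHG) (hq.mapLe hHG)
    have h1 := (hi (r i)).2 (hr i)
    rw [Walk.edges_mapLe_eq_edges] at h1
    have h2 := q.edges_subset_edgeSet h1
    rw [SimpleGraph.edgeSet_deleteEdges] at h2
    exact h2.2 ⟨i, rfl⟩
  obtain ⟨T, hHT, -, hT⟩ := hconn.exists_isTree_le_of_le_of_isAcyclic hHG hH
  have hcard : Nat.card T.edgeSet + 1 = Fintype.card V := by
    rw [Nat.card_eq_fintype_card, ← SimpleGraph.edgeFinset_card]
    exact hT.card_edgeFinset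
  have hmem : ∀ e ∈ G.edgeSet, (∀ i, r i ≠ e) → e ∈ T.edgeSet := fun e he hne => by
    apply SimpleGraph.edgeSet_mono hHT
    rw [SimpleGraph.edgeSet_deleteEdges]
    exact ⟨he, fun ⟨i, hi⟩ => hne i hi⟩
  have hlt : ∀ (i : Fin p) (j : Fin ((w i).length - 1)), j.1 + 1 < (w i).edges.length :=
    fun i j => by
      have := j.2
      rw [Walk.length_edges]; omega
  let E : (Σ i, Fin ((w i).length - 1)) → Sym2 V := fun s =>
    (w s.1).edges[s.2.1 + 1]'(hlt s.1 s.2)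
  have hE : ∀ s, E s ∈ (w s.1).edges := fun s => List.getElem_mem _
  have hEr : ∀ s i, r i ≠ E s := by
    rintro ⟨i, j⟩ i' h
    by_cases hii : i' = i
    · subst hii
      have := (List.Nodup.getElem_inj_iff (hcyc i').edges_nodup).1 h
      omega
    · exact hdisj i' i hii _ (hr i') (h ▸ hE ⟨i, j⟩)
  let F : Rest w ⊕ (Σ i, Fin ((w i).length - 1)) → T.edgeSet := Sum.elim
    (fun e => ⟨e.1, hmem _ e.2.1 fun i h => e.2.2 i (h ▸ hr i)⟩)
    (fun s => ⟨E s, hmem _ ((w s.1).edges_subset_edgeSet (hE s)) (hEr s)⟩)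
  have hF : Function.Injective F := by
    rintro (e | ⟨i, j⟩) (e' | ⟨i', j'⟩) h
    · have h' : e.1 = e'.1 := congrArg (fun t : T.edgeSet => t.1) h
      rw [Subtype.ext h']
    · have h' : e.1 = E ⟨i', j'⟩ := congrArg Subtype.val h
      exact absurd (hE ⟨i', j'⟩) (h' ▸ e.2.2 i')
    · have h' : E ⟨i, j⟩ = e'.1 := congrArg Subtype.val h
      exact absurd (hE ⟨i, j⟩) (h' ▸ e'.2.2 i)
    · have h' : E ⟨i, j⟩ = E ⟨i', j'⟩ := congrArg Subtype.val h
      by_cases hii : i = i'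
      · subst hii
        have := (List.Nodup.getElem_inj_iff (hcyc i).edges_nodup).1 h'
        have hj : j = j' := Fin.ext (Nat.succ_injective this)
        rw [hj]
      · exact absurd (h' ▸ hE ⟨i', j'⟩) (hdisj i i' hii _ (hE ⟨i, j⟩))
  have hle := Nat.card_le_card_of_injective F hF
  rw [Nat.card_sum, Nat.card_sigma] at hle
  simp only [Nat.card_fin] at hle
  omega

end Graph

/-! ### The bound -/

/-- **Lemma 4.10.**  Let `G` be a connected cactus graph of order `n` with exactly `p ≥ 1`
cycles, given as pairwise edge-disjoint cycle walks `w i` such that every cycle of `G` has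
the same edge set as one of them.  Then for every natural number `x ≥ 1`,
`3^(3p) · (x+1)^(p-1) · x^(8p+1) · π(G, x+1) ≤ x^n · (3x³+1)^(3p)` as real numbers
(the multiplied-out form of `π(G,x+1) ≤ x^(n-8p-1)(3x³+1)^(3p)/(3^(3p)(x+1)^(p-1))`). -/
theorem statement_15 {V : Type} [Fintype V] (G : SimpleGraph V) (hconn : G.Connected)
    (p : ℕ) (hp : 1 ≤ p) (u : Fin p → V) (w : ∀ i, G.Walk (u i) (u i))
    (hcyc : ∀ i, (w i).IsCycle)
    (hdisj : ∀ i j, i ≠ j → ∀ e, e ∈ (w i).edges → e ∉ (w j).edges)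
    (hall : ∀ (v : V) (q : G.Walk v v), q.IsCycle →
      ∃ i, ∀ e, e ∈ q.edges ↔ e ∈ (w i).edges)
    (n : ℕ) (hn : Fintype.card V = n)
    (x : ℕ) (hx : 1 ≤ x) :
    (3 : ℝ) ^ (3*p) * ((x : ℝ) + 1) ^ (p - 1) * (x : ℝ) ^ (8*p + 1) *
        (chromPoly G (x + 1) : ℝ)
      ≤ (x : ℝ) ^ n * (3 * (x : ℝ)^3 + 1) ^ (3*p) := by
  have hx' : (1 : ℝ) ≤ x := by exact_mod_cast hx
  have hx0 : (0 : ℝ) ≤ x := by linarith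
  have h1 := chromPoly_le hconn w x
  have h2 := card_rest_add_le hconn w hcyc hdisj hall
  rw [hn] at h2
  set R := Nat.card (Rest w)
  have h1' : (chromPoly G (x + 1) : ℝ) ≤ ((x : ℝ) + 1) *
      (∏ i, (Nat.card (ZeroSum (ZMod (x + 1)) (w i).length) : ℝ)) * (x : ℝ) ^ R := by
    exact_mod_cast h1
  have hprod : (((x : ℝ) + 1) * (x : ℝ) ^ 2) ^ p *
      (∏ i, (Nat.card (ZeroSum (ZMod (x + 1)) (w i).length) : ℝ)) ≤
      (x : ℝ) ^ (∑ i, ((w i).length - 1)) * ((x : ℝ) ^ 3 + 1) ^ p := by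
    have : ∏ i, (((x : ℝ) + 1) * (x : ℝ) ^ 2 *
        (Nat.card (ZeroSum (ZMod (x + 1)) (w i).length) : ℝ)) ≤
        ∏ i, ((x : ℝ) ^ ((w i).length - 1) * ((x : ℝ) ^ 3 + 1)) :=
      Finset.prod_le_prod (fun i _ => by positivity) fun i _ =>
        zeroSumCount_le _ x _ hx (hcyc i).three_le_length (Nat.card_zmod _)
    simpa [Finset.prod_mul_distrib, Finset.prod_pow_eq_pow_sum] using this
  set P := ∏ i, (Nat.card (ZeroSum (ZMod (x + 1)) (w i).length) : ℝ)
  have hmid : ((x : ℝ) + 1) ^ (p - 1) * (x : ℝ) ^ (2*p + 1) * (chromPoly G (x + 1) : ℝ) ≤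
      (x : ℝ) ^ n * ((x : ℝ) ^ 3 + 1) ^ p := by
    have hk : ((x : ℝ) + 1) ^ p = ((x : ℝ) + 1) ^ (p - 1) * ((x : ℝ) + 1) := by
      rw [← pow_succ]; congr 1; omega
    calc _ ≤ ((x : ℝ) + 1) ^ (p - 1) * (x : ℝ) ^ (2*p + 1) *
          (((x : ℝ) + 1) * P * (x : ℝ) ^ R) := by gcongr
      _ = ((((x : ℝ) + 1) * (x : ℝ) ^ 2) ^ p * P) * (x : ℝ) ^ (R + 1) := by
          rw [mul_pow, hk, ← pow_mul]; ring
      _ ≤ ((x : ℝ) ^ (∑ i, ((w i).length - 1)) * ((x : ℝ) ^ 3 + 1) ^ p) * (x : ℝ) ^ (R + 1) := by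
          gcongr
      _ = (x : ℝ) ^ (R + ∑ i, ((w i).length - 1) + 1) * ((x : ℝ) ^ 3 + 1) ^ p := by ring
      _ ≤ _ := by gcongr
  have hfin : (27 * (x : ℝ) ^ 6) ^ p * ((x : ℝ) ^ 3 + 1) ^ p ≤ (3 * (x : ℝ)^3 + 1) ^ (3*p) := by
    rw [← mul_pow, pow_mul]
    gcongr
    nlinarith [pow_nonneg hx0 3]
  calc _ = (27 * (x : ℝ) ^ 6) ^ p * (((x : ℝ) + 1) ^ (p - 1) * (x : ℝ) ^ (2*p + 1) *
        (chromPoly G (x + 1) : ℝ)) := by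
        have h27 : (3 : ℝ) ^ (3*p) = 27 ^ p := by rw [pow_mul]; norm_num
        have h8 : (x : ℝ) ^ (8*p + 1) = ((x : ℝ) ^ 6) ^ p * (x : ℝ) ^ (2*p + 1) := by
          rw [← pow_mul, ← pow_add]; congr 1; ring
        rw [h27, h8, mul_pow]; ring
    _ ≤ (27 * (x : ℝ) ^ 6) ^ p * ((x : ℝ) ^ n * ((x : ℝ) ^ 3 + 1) ^ p) := by gcongr
    _ = (x : ℝ) ^ n * ((27 * (x : ℝ) ^ 6) ^ p * ((x : ℝ) ^ 3 + 1) ^ p) := by ring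
    _ ≤ _ := by gcongr
end
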